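/- Let M be a semi-finite von Neumann algebra (i.e., a von Neumann algebra admitting a faithful normal semifinite trace) and let Δ : M → M be a 2-local derivation. Then Δ is additive: Δ(u + v) = Δ(u) + Δ(v) for all u, v ∈ M. -/

import Mathlib

open scoped ENNReal NNReal

variable {H : Type*} [NormedAddCommGroup H] [InnerProductSpace ℂ H] [CompleteSpace H]

/-- Scalar multiplication is inherited by a von Neumann algebra from `B(H)`. -/
instance : SMulMemClass (VonNeumannAlgebra H) ℂ (H →L[ℂ] H) where
  smul_mem {M} c _x hx := M.toStarSubalgebra.smul_mem hx c

/-- A map `D : M → M` is a derivation: it is `ℂ`-linear and satisfies the Leibniz rule. -/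
def IsDerivation (M : VonNeumannAlgebra H) (D : M → M) : Prop :=
  (∀ x y : M, D (x + y) = D x + D y) ∧
  (∀ (c : ℂ) (x : M), D (c • x) = c • D x) ∧
  (∀ x y : M, D (x * y) = D x * y + x * D y)

/-- A map `Δ : M → M` (not assumed linear) is a 2-local derivation if for every pair `x, y`
there is a derivation agreeing with `Δ` at `x` and at `y`. -/
def Is2LocalDerivation (M : VonNeumannAlgebra H) (Δ : M → M) : Prop :=
  ∀ x y : M, ∃ D : M → M, IsDerivation M D ∧ Δ x = D x ∧ Δ y = D y

/-- An element of a von Neumann algebra is positive if it is a positive operator on `H`. -/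
def IsPos (M : VonNeumannAlgebra H) (x : M) : Prop :=
  ContinuousLinearMap.IsPositive (x : H →L[ℂ] H)

/-- The operator (Loewner) order on a von Neumann algebra: `x ≤ y` iff `y - x` is positive. -/
def OpLE (M : VonNeumannAlgebra H) (x y : M) : Prop :=
  ContinuousLinearMap.IsPositive ((y : H →L[ℂ] H) - (x : H →L[ℂ] H))

/-- A faithful normal semifinite trace on a von Neumann algebra `M`: a map on `M` which, on the
positive cone, is additive and positively homogeneous, satisfies `τ(xx⋆) = τ(x⋆x)`, is faithful,
normal (commutes with suprema of bounded monotone increasing nets of positive elements) and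
semifinite. -/
structure FNSTrace (M : VonNeumannAlgebra H) : Type _ where
  τ : M → ℝ≥0∞
  additive : ∀ x y : M, IsPos M x → IsPos M y → τ (x + y) = τ x + τ y
  pos_smul : ∀ (c : ℝ≥0) (x : M), IsPos M x → τ ((c : ℂ) • x) = c * τ x
  tracial : ∀ x : M, τ (x * star x) = τ (star x * x)
  faithful : ∀ x : M, IsPos M x → τ x = 0 → x = 0
  normal : ∀ {ι : Type} [Nonempty ι] [Preorder ι] [IsDirected ι (· ≤ ·)]
      (f : ι → M) (s : M), (∀ i, IsPos M (f i)) →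
      (∀ i j, i ≤ j → OpLE M (f i) (f j)) →
      (∀ i, OpLE M (f i) s) → (∀ u : M, (∀ i, OpLE M (f i) u) → OpLE M s u) →
      τ s = ⨆ i, τ (f i)
  semifinite : ∀ x : M, IsPos M x → x ≠ 0 →
      ∃ y : M, IsPos M y ∧ y ≠ 0 ∧ OpLE M y x ∧ τ y < ⊤

/-- `a` belongs to the definition ideal `m_τ = {a ∈ M : τ(|a|) < ∞}`, where `|a|` is the unique
positive square root of `a⋆a`. -/
def MemIdeal (M : VonNeumannAlgebra H) (τ : M → ℝ≥0∞) (a : M) : Prop :=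
  ∃ b : M, IsPos M b ∧ b * b = star a * a ∧ τ b < ⊤

/-!
Let `p` be a projection of finite trace and put `φ x = τ (p * x * p)`, a bounded positive functional
with `φ (x * p * y) = φ (y * p * x)`. A derivation `D` is bounded, and `φ ∘ D` vanishes at every
projection `q ≤ p` because `q * D q * q = 0`. As these projections span a dense subspace of the
corner of `p`, one gets `φ (D (p * x * p)) = 0`, that is, `φ (D x) = -φ (D p * x + x * D p)`.

If `D` is chosen to agree with `Δ` at `x` and at `p`, this becomes
`φ (Δ x) = -φ (Δ p * x + x * Δ p)`, whose right-hand side is linear in `x`. Hence `φ` vanishes at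
`Δ (u + v) - Δ u - Δ v`. The functionals `φ` separate points since `τ` is faithful and semifinite.
The spectral theory this takes is the existence of support projections, so the natural setting is
that of C⋆-algebras which are Rickart `*`-rings.
-/

open Filter Topology
open scoped ComplexStarModule

/-! ### Automatic continuity of derivations -/

/-- A derivation of a complex algebra. Mathlib's `Derivation` is not used because it is restricted
to commutative algebras. -/
def IsLeibniz {A : Type*} [Ring A] [Algebra ℂ A] (D : A →ₗ[ℂ] A) : Prop :=
  ∀ x y, D (x * y) = D x * y + x * D y

lemma continuous_of_norm_le_norm_add_smul {E : Type*} [NormedAddCommGroup E] [NormedSpace ℝ E]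
    [CompleteSpace E] (T : E →ₗ[ℝ] E) (hT : ∀ x (t : ℝ), ‖x‖ ≤ ‖x + t • T x‖) :
    Continuous T := by
  have eq_zero_of_tendsto {u : ℕ → E} {b : E} (hu : Tendsto u atTop (𝓝 0))
      (hTu : Tendsto (fun n ↦ T (u n)) atTop (𝓝 b)) : b = 0 := by
    have norm_le (s : ℝ) (hs : s ≠ 0) : ‖b‖ ≤ ‖s⁻¹ • T b‖ := by
      have hlim : Tendsto (fun n ↦ b + s • u n) atTop (𝓝 (b + s • 0)) :=
        tendsto_const_nhds.add (hu.const_smul s)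
      have hlimT : Tendsto (fun n ↦ T (b + s • u n)) atTop (𝓝 (T b + s • b)) := by
        simpa using tendsto_const_nhds.add (hTu.const_smul s)
      have hle := le_of_tendsto_of_tendsto' hlim.norm (hlim.add (hlimT.const_smul (-s⁻¹))).norm
        fun n ↦ hT _ _
      simpa [hs] using hle
    have hlim : Tendsto (fun s : ℝ ↦ ‖s⁻¹ • T b‖) atTop (𝓝 0) := by
      simpa using ((tendsto_inv_atTop_zero (𝕜 := ℝ)).smul_const (T b)).norm
    exact norm_le_zero_iff.mp <| ge_of_tendsto hlim <|
      (eventually_ne_atTop 0).mono norm_le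
  refine T.continuous_of_seq_closed_graph fun u x y hu hTu ↦ sub_eq_zero.mp ?_
  refine eq_zero_of_tendsto (u := fun n ↦ u n - x) ?_ ?_
  · simpa using hu.sub_const x
  · simpa using hTu.sub_const (T x)

section SelfAdjoint

variable {A : Type*} [CStarAlgebra A] [PartialOrder A] [StarOrderedRing A]

lemma smul_mul_add_mul_le (h k : selfAdjoint A) (s : ℝ) :
    s • (k * h + h * k : A) ≤ s ^ 2 • (h * h : A) + ‖k‖ ^ 2 • (1 : A) := by
  have hk : (k * k : A) ≤ ‖k‖ ^ 2 • (1 : A) := by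
    have := CStarAlgebra.star_mul_le_algebraMap_norm_sq (a := (k : A))
    rwa [k.2.star_eq, Algebra.algebraMap_eq_smul_one] at this
  have sq_nonneg : 0 ≤ (s • h - k : A) * (s • h - k : A) := by
    simpa using (s • h - k).2.mul_self_nonneg
  calc s • (k * h + h * k : A)
      = s ^ 2 • (h * h : A) + k * k - (s • h - k : A) * (s • h - k : A) := by
        simp only [sub_mul, mul_sub, smul_mul_assoc, mul_smul_comm]
        module
    _ ≤ s ^ 2 • (h * h : A) + ‖k‖ ^ 2 • (1 : A) := (sub_le_self _ sq_nonneg).trans (by gcongr)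

lemma exists_smul_one_le_mul_self {h k : selfAdjoint A} {δ : ℝ} (hδ : 0 < δ)
    (hδ_le : δ • (1 : A) ≤ h * h + (k * h + h * k)) :
    ∃ ε : ℝ, 0 < ε ∧ ε • (1 : A) ≤ h * h := by
  set s : ℝ := (‖k‖ ^ 2 + 1) / δ
  have hs : 0 < s := by positivity
  have hsδ : s * δ = ‖k‖ ^ 2 + 1 := div_mul_cancel₀ _ hδ.ne'
  have one_le : (1 : A) ≤ (s + s ^ 2) • (h * h : A) := by
    have := calc (‖k‖ ^ 2 + 1) • (1 : A) = s • δ • (1 : A) := by rw [smul_smul, hsδ]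
      _ ≤ s • (h * h + (k * h + h * k) : A) := smul_le_smul_of_nonneg_left hδ_le hs.le
      _ = s • (h * h : A) + s • (k * h + h * k : A) := smul_add ..
      _ ≤ s • (h * h : A) + (s ^ 2 • (h * h : A) + ‖k‖ ^ 2 • (1 : A)) := by
        gcongr; exact smul_mul_add_mul_le h k s
    rw [← sub_nonneg] at this ⊢
    convert this using 1
    module
  exact ⟨(s + s ^ 2)⁻¹, by positivity, (inv_smul_le_iff_of_pos (by positivity)).mpr one_le⟩

end SelfAdjoint

namespace IsLeibniz

section Ring

variable {A : Type*} [Ring A] [Algebra ℂ A] {D : A →ₗ[ℂ] A}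

protected lemma map_mul (hD : IsLeibniz D) (x y : A) : D (x * y) = D x * y + x * D y := hD x y

lemma smul (hD : IsLeibniz D) (c : ℂ) : IsLeibniz (c • D) := fun x y ↦ by
  simp [hD x y]

lemma mul_map_mul_self (hD : IsLeibniz D) {q : A} (hq : IsIdempotentElem q) :
    q * D q * q = 0 := by
  have h : q * D q * q = q * D q * q + q * D q * q := by
    calc q * D q * q = q * D (q * q) * q := by rw [hq.eq]
      _ = q * D q * (q * q) + (q * q) * D q * q := by rw [hD.map_mul]; noncomm_ring
      _ = q * D q * q + q * D q * q := by rw [hq.eq]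
  exact left_eq_add.mp h

lemma map_one (hD : IsLeibniz D) : D 1 = 0 := by
  simpa using hD 1 1

end Ring

variable {A : Type*} [CStarAlgebra A] {D : A →ₗ[ℂ] A}

lemma realPart_map_mul_self (hD : IsLeibniz D) (h : selfAdjoint A) :
    (ℜ (D (h * h)) : A) = ℜ (D h) * h + h * ℜ (D h) := by
  simp only [hD.map_mul, realPart_apply_coe, star_add, star_mul, h.2.star_eq, smul_mul_assoc,
    mul_smul_comm, add_mul, mul_add]
  module

section Order

variable [PartialOrder A] [StarOrderedRing A]

/-- With `x = ‖x‖ - h ^ 2` one has `ℜ (D x) = -(k * h + h * k)` for `k = ℜ (D h)`. Were the norm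
of `x + ℜ (D x)` smaller than that of `x`, then `h ^ 2` would be invertible, and `‖x‖` would not be
in the spectrum of `x`. -/
lemma norm_le_norm_add_realPart_of_norm_mem_spectrum (hD : IsLeibniz D) (x : selfAdjoint A)
    (hx : ‖x‖ ∈ spectrum ℝ (x : A)) : ‖x‖ ≤ ‖x + ℜ (D x)‖ := by
  by_contra! hlt
  have hx_le : 0 ≤ ‖x‖ • (1 : A) - x :=
    sub_nonneg.mpr (Algebra.algebraMap_eq_smul_one (A := A) ‖x‖ ▸ x.2.le_algebraMap_norm_self)
  obtain ⟨h, hh⟩ : ∃ h : selfAdjoint A, (h * h : A) = ‖x‖ • (1 : A) - x :=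
    ⟨⟨CFC.sqrt _, (CFC.sqrt_nonneg _).isSelfAdjoint⟩, CFC.sqrt_mul_sqrt_self _ hx_le⟩
  have hDx : (ℜ (D x) : A) = -(ℜ (D h) * h + h * ℜ (D h) : A) := by
    have hx_eq : (x : A) = ((‖x‖ : ℂ) • (1 : A)) - h * h := by simp [hh]
    rw [← hD.realPart_map_mul_self, hx_eq]
    simp [hD.map_one]
  have smul_one_le : (‖x‖ - ‖x + ℜ (D x)‖) • (1 : A) ≤ h * h + (ℜ (D h) * h + h * ℜ (D h)) := by
    have := (x + ℜ (D x)).2.le_algebraMap_norm_self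
    rw [Algebra.algebraMap_eq_smul_one] at this
    calc (‖x‖ - ‖x + ℜ (D x)‖) • (1 : A) = ‖x‖ • (1 : A) - ‖x + ℜ (D x)‖ • (1 : A) := sub_smul ..
      _ ≤ ‖x‖ • (1 : A) - (x + ℜ (D x) : selfAdjoint A) := sub_le_sub_left this _
      _ = h * h + (ℜ (D h) * h + h * ℜ (D h)) := by simp [hh, hDx]; abel
  obtain ⟨ε, hε, hεh⟩ := exists_smul_one_le_mul_self (sub_pos.mpr hlt) smul_one_le
  have hx_le' : (x : A) ≤ algebraMap ℝ A (‖x‖ - ε) := by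
    rw [hh] at hεh
    rw [Algebra.algebraMap_eq_smul_one, sub_smul]
    exact le_sub_comm.mp hεh
  have := (le_algebraMap_iff_spectrum_le (by cfc_tac)).mp hx_le' _ hx
  linarith

end Order

lemma norm_le_norm_add_realPart (hD : IsLeibniz D) (x : selfAdjoint A) :
    ‖x‖ ≤ ‖x + ℜ (D x)‖ := by
  nontriviality A
  let _ := CStarAlgebra.spectralOrder A
  have := CStarAlgebra.spectralOrderedRing A
  rcases CStarAlgebra.norm_or_neg_norm_mem_spectrum x.2 with hx | hx
  · exact hD.norm_le_norm_add_realPart_of_norm_mem_spectrum x hx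
  · rw [← norm_neg x, ← norm_neg (x + _)]
    have := hD.norm_le_norm_add_realPart_of_norm_mem_spectrum (-x) (by
      rwa [NegMemClass.coe_neg, ← spectrum.neg_eq, Set.mem_neg, norm_neg])
    simpa [add_comm] using this

lemma continuous_realPart_comp_coe (hD : IsLeibniz D) :
    Continuous fun x : selfAdjoint A ↦ ℜ (D x) := by
  have : CompleteSpace (selfAdjoint A) :=
    (isClosed_eq continuous_star continuous_id).completeSpace_coe
  let T : selfAdjoint A →ₗ[ℝ] selfAdjoint A :=
    { toFun x := ℜ (D x)
      map_add' x y := by simp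
      map_smul' t x := by simp }
  exact continuous_of_norm_le_norm_add_smul T fun x t ↦ by
    simpa [T] using (hD.smul t).norm_le_norm_add_realPart x

theorem continuous (hD : IsLeibniz D) : Continuous D := by
  have continuous_realPart : Continuous (ℜ : A → selfAdjoint A) :=
    (selfAdjointPartL ℝ A).continuous
  have continuous_imaginaryPart : Continuous (ℑ : A → selfAdjoint A) := by
    simpa [Function.comp_def, realPart_I_smul] using
      continuous_realPart.comp (continuous_const_smul (-Complex.I))
  have continuous_realPart_comp := hD.continuous_realPart_comp_coe
  have continuous_imaginaryPart_comp : Continuous fun x : selfAdjoint A ↦ ℑ (D x) := by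
    simpa [realPart_I_smul] using (hD.smul (-Complex.I)).continuous_realPart_comp_coe
  have continuous_comp_coe : Continuous fun x : selfAdjoint A ↦ D x := by
    have : Continuous fun x : selfAdjoint A ↦ (ℜ (D x) + Complex.I • ℑ (D x) : A) :=
      (continuous_subtype_val.comp continuous_realPart_comp).add
        ((continuous_subtype_val.comp continuous_imaginaryPart_comp).const_smul Complex.I)
    simpa only [realPart_add_I_smul_imaginaryPart] using this
  have : Continuous fun x : A ↦ D (ℜ x) + Complex.I • D (ℑ x) :=
    (continuous_comp_coe.comp continuous_realPart).add
      ((continuous_comp_coe.comp continuous_imaginaryPart).const_smul Complex.I)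
  simpa only [← map_smul, ← map_add, realPart_add_I_smul_imaginaryPart] using this

end IsLeibniz

/-! ### Rickart C⋆-algebras -/

/-- A Rickart `*`-ring: the right annihilator of every element is `(1 - q)A` for some
projection `q`. -/
class IsRickartStarRing (A : Type*) [Ring A] [StarRing A] : Prop where
  exists_isStarProjection_mul_eq_zero_iff (a : A) :
    ∃ q : A, IsStarProjection q ∧ ∀ x, q * x = 0 ↔ a * x = 0

section RickartRing

variable {A : Type*} [Ring A] [StarRing A] [IsRickartStarRing A]

/-- The right support projection of `a`: the projection with the same right annihilator as `a`. -/
noncomputable def rightSupport (a : A) : A :=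
  (IsRickartStarRing.exists_isStarProjection_mul_eq_zero_iff a).choose

lemma isStarProjection_rightSupport (a : A) : IsStarProjection (rightSupport a) :=
  (IsRickartStarRing.exists_isStarProjection_mul_eq_zero_iff a).choose_spec.1

lemma rightSupport_mul_eq_zero_iff {a x : A} : rightSupport a * x = 0 ↔ a * x = 0 :=
  (IsRickartStarRing.exists_isStarProjection_mul_eq_zero_iff a).choose_spec.2 x

lemma mul_rightSupport (a : A) : a * rightSupport a = a := by
  have := rightSupport_mul_eq_zero_iff.mp (isStarProjection_rightSupport a).mul_one_sub_self
  rwa [mul_sub, mul_one, sub_eq_zero, eq_comm] at this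

lemma rightSupport_eq_zero_iff {a : A} : rightSupport a = 0 ↔ a = 0 := by
  simpa using rightSupport_mul_eq_zero_iff (a := a) (x := 1)

lemma rightSupport_mul_of_isSelfAdjoint {a : A} (ha : IsSelfAdjoint a) :
    rightSupport a * a = a := by
  simpa [ha.star_eq, (isStarProjection_rightSupport a).isSelfAdjoint.star_eq]
    using congrArg star (mul_rightSupport a)

end RickartRing

section RickartCStarAlgebra

variable {A : Type*} [CStarAlgebra A] [PartialOrder A] [StarOrderedRing A]

lemma posPart_mul_eq_zero {x b : A} (hx : IsSelfAdjoint x) (hxb : x * b = 0) : x⁺ * b = 0 := by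
  rw [← CStarRing.star_mul_self_eq_zero_iff, star_mul, (CFC.posPart_nonneg x).star_eq]
  have : x⁺ * x⁺ = x⁺ * x := by
    nth_rw 4 [← CFC.posPart_sub_negPart x]
    rw [mul_sub, CFC.posPart_mul_negPart, sub_zero]
  rw [mul_assoc, ← mul_assoc x⁺, this, mul_assoc, hxb, mul_zero, mul_zero]

lemma mul_eq_zero_of_conjugate_eq_zero {a b : A} (ha : 0 ≤ a) (h : star b * a * b = 0) :
    a * b = 0 := by
  have hs : star (CFC.sqrt a) = CFC.sqrt a := (CFC.sqrt_nonneg a).isSelfAdjoint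
  have : CFC.sqrt a * b = 0 := by
    rw [← CStarRing.star_mul_self_eq_zero_iff, star_mul, hs, mul_assoc, ← mul_assoc _ _ b,
      CFC.sqrt_mul_sqrt_self a, ← mul_assoc, h]
  rw [← CFC.sqrt_mul_sqrt_self a, mul_assoc, this, mul_zero]

variable [IsRickartStarRing A]

lemma negPart_mul_rightSupport_posPart (x : A) : x⁻ * rightSupport x⁺ = 0 := by
  have := rightSupport_mul_eq_zero_iff.mpr (CFC.posPart_mul_negPart x)
  simpa [(CFC.negPart_nonneg x).star_eq,
    (isStarProjection_rightSupport x⁺).isSelfAdjoint.star_eq] using congrArg star this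

lemma rightSupport_posPart_mul_mul_self {x : A} (hx : IsSelfAdjoint x) :
    rightSupport x⁺ * x * rightSupport x⁺ = x⁺ := by
  nth_rw 2 [← CFC.posPart_sub_negPart x]
  rw [mul_assoc, sub_mul, mul_rightSupport, negPart_mul_rightSupport_posPart, sub_zero,
    rightSupport_mul_of_isSelfAdjoint (CFC.posPart_nonneg x).isSelfAdjoint]

lemma one_sub_rightSupport_posPart_mul_mul_self {x : A} (hx : IsSelfAdjoint x) :
    (1 - rightSupport x⁺) * x * (1 - rightSupport x⁺) = -x⁻ := by
  have hq_mul : x * (1 - rightSupport x⁺) = -x⁻ := by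
    nth_rw 1 [← CFC.posPart_sub_negPart x]
    rw [mul_sub, mul_one, sub_mul, mul_rightSupport, negPart_mul_rightSupport_posPart]
    abel
  rw [mul_assoc, hq_mul, sub_mul, one_mul, mul_neg,
    rightSupport_mul_eq_zero_iff.mpr (CFC.posPart_mul_negPart x), neg_zero, sub_zero]

lemma rightSupport_posPart_le {x p : A} (hx : IsSelfAdjoint x) (hp : IsStarProjection p)
    (hxp : x * p = x) : rightSupport x⁺ ≤ p := by
  have hx_mul : x * (1 - p) = 0 := by rw [mul_sub, mul_one, hxp, sub_self]
  have := rightSupport_mul_eq_zero_iff.mpr (posPart_mul_eq_zero hx hx_mul)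
  rw [mul_sub, mul_one, sub_eq_zero, eq_comm] at this
  exact ((isStarProjection_rightSupport _).le_iff_mul_eq_left hp).mpr this

lemma exists_isStarProjection_smul_le_conjugate {y q : A} {μ : ℝ} (hy : IsSelfAdjoint y)
    (hq : IsStarProjection q) (hyq : y * q = y) (hyμ : ¬y ≤ μ • q) :
    ∃ p ≤ q, IsStarProjection p ∧ p ≠ 0 ∧ μ • p ≤ p * y * p := by
  have hz : IsSelfAdjoint (y - μ • q) := hy.sub ((IsSelfAdjoint.all μ).smul hq.isSelfAdjoint)
  set p := rightSupport (y - μ • q)⁺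
  have hp : IsStarProjection p := isStarProjection_rightSupport _
  have hpq : p ≤ q := rightSupport_posPart_le hz hq <| by
    rw [sub_mul, hyq, smul_mul_assoc, hq.isIdempotentElem.eq]
  refine ⟨p, hpq, hp, fun hp0 ↦ hyμ ?_, sub_nonneg.mp ?_⟩
  · rwa [← sub_nonpos, ← CFC.posPart_eq_zero_iff _ hz, ← rightSupport_eq_zero_iff]
  · calc 0 ≤ (y - μ • q)⁺ := CFC.posPart_nonneg _
      _ = p * (y - μ • q) * p := (rightSupport_posPart_mul_mul_self hz).symm
      _ = p * y * p - μ • p := by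
        rw [mul_sub, sub_mul, mul_smul_comm, smul_mul_assoc, (hp.le_iff_mul_eq_left hq).mp hpq,
          hp.isIdempotentElem.eq]

/-- The first step of the binary expansion of `a` into projections: `q` is the spectral projection
of `a` for `(1 / 2, ∞)`. -/
lemma exists_isStarProjection_add_self_eq_add {p a : A} (hp : IsStarProjection p) (ha : 0 ≤ a)
    (hap : a ≤ p) :
    ∃ q r : A, IsStarProjection q ∧ q ≤ p ∧ 0 ≤ r ∧ r ≤ p ∧ a + a = q + r := by
  set x := a + a - p with hx_def
  have hx : IsSelfAdjoint x := (ha.isSelfAdjoint.add ha.isSelfAdjoint).sub hp.isSelfAdjoint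
  set q := rightSupport x⁺
  have hq : IsStarProjection q := isStarProjection_rightSupport _
  have hqp_le : q ≤ p := rightSupport_posPart_le hx hp <| by
    rw [sub_mul, add_mul, hp.isIdempotentElem.eq,
      (hp.mul_right_and_mul_left_of_nonneg_of_le ha hap).1]
  have hqp : q * p = q := (hq.le_iff_mul_eq_left hp).mp hqp_le
  have hpq : p * q = q := (hq.le_iff_mul_eq_right hp).mp hqp_le
  have posPart_le : x⁺ ≤ q := by
    have hxp : x ≤ p := sub_le_iff_le_add.mpr (add_le_add hap hap)
    calc x⁺ = q * x * q := (rightSupport_posPart_mul_mul_self hx).symm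
      _ ≤ q * p * q := hq.isSelfAdjoint.conjugate_le_conjugate hxp
      _ = q := by rw [hqp, hq.isIdempotentElem.eq]
  have negPart_le : x⁻ ≤ p - q := by
    have hxp : -x ≤ p := by
      simpa [hx_def] using add_nonneg ha ha
    calc x⁻ = (1 - q) * -x * (1 - q) := by
          rw [mul_neg, neg_mul, one_sub_rightSupport_posPart_mul_mul_self hx, neg_neg]
      _ ≤ (1 - q) * p * (1 - q) := hq.one_sub.isSelfAdjoint.conjugate_le_conjugate hxp
      _ = p - q := by
        simp only [sub_mul, mul_sub, one_mul, mul_one, hqp, hpq, hq.isIdempotentElem.eq]; abel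
  have hr : a + a - q = x⁺ + (p - q - x⁻) := by
    have := CFC.posPart_sub_negPart x
    rw [sub_eq_iff_eq_add] at this
    rw [this, hx_def]; abel
  refine ⟨q, a + a - q, hq, hqp_le, ?_, ?_, by abel⟩
  · rw [hr]
    exact add_nonneg (CFC.posPart_nonneg x) (sub_nonneg.mpr negPart_le)
  · calc a + a - q = x⁺ + (p - q - x⁻) := hr
      _ ≤ q + (p - q - 0) := by gcongr; exact CFC.negPart_nonneg x
      _ = p := by abel

variable {F : Type*} [NormedAddCommGroup F] [NormedSpace ℂ F] {L : A →L[ℂ] F} {p : A}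

lemma map_eq_zero_of_le_of_forall_isStarProjection (hp : IsStarProjection p)
    (hL : ∀ q, IsStarProjection q → q ≤ p → L q = 0) {a : A} (ha : 0 ≤ a) (hap : a ≤ p) :
    L a = 0 := by
  have two_pow_mul_le (n : ℕ) : ∀ a, 0 ≤ a → a ≤ p → 2 ^ n * ‖L a‖ ≤ ‖L‖ := by
    induction n with
    | zero =>
      intro a ha hap
      have : ‖a‖ ≤ 1 := (CStarAlgebra.norm_le_one_iff_of_nonneg a).mpr (hap.trans hp.le_one)
      simpa using L.le_of_opNorm_le_of_le le_rfl this
    | succ n ih =>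
      intro a ha hap
      obtain ⟨q, r, hq, hqp, hr, hrp, haa⟩ := exists_isStarProjection_add_self_eq_add hp ha hap
      have hLr : (2 : ℂ) • L a = L r := by
        rw [two_smul, ← map_add, haa, map_add, hL q hq hqp, zero_add]
      calc 2 ^ (n + 1) * ‖L a‖ = 2 ^ n * ‖(2 : ℂ) • L a‖ := by
              rw [norm_smul, Complex.norm_ofNat, pow_succ, mul_assoc]
        _ ≤ ‖L‖ := hLr ▸ ih r hr hrp
  by_contra hne
  obtain ⟨n, hn⟩ := pow_unbounded_of_one_lt (‖L‖ / ‖L a‖) (one_lt_two (α := ℝ))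
  rw [div_lt_iff₀ (norm_pos_iff.mpr hne)] at hn
  exact hn.not_ge (two_pow_mul_le n a ha hap)

lemma map_mul_mul_self_eq_zero_of_forall_isStarProjection (hp : IsStarProjection p)
    (hL : ∀ q, IsStarProjection q → q ≤ p → L q = 0) (x : A) : L (p * x * p) = 0 := by
  have map_eq_zero_of_nonneg {x : A} (hx : 0 ≤ x) : L (p * x * p) = 0 := by
    rcases eq_or_ne x 0 with rfl | hx0
    · simp
    have hle : p * x * p ≤ ‖x‖ • p := by
      simpa [hp.isSelfAdjoint.star_eq, hp.isIdempotentElem.eq] using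
        CStarAlgebra.star_left_conjugate_le_norm_smul (a := p) (b := x)
    have hnn : 0 ≤ p * x * p := hp.isSelfAdjoint.conjugate_nonneg hx
    have : L ((‖x‖⁻¹ : ℝ) • (p * x * p)) = 0 := by
      refine map_eq_zero_of_le_of_forall_isStarProjection hp hL (smul_nonneg (by positivity) hnn) ?_
      rwa [inv_smul_le_iff_of_pos (norm_pos_iff.mpr hx0)]
    rw [LinearMapClass.map_smul_of_tower L] at this
    simpa [hx0] using this
  have : x ∈ Submodule.span ℂ {a : A | 0 ≤ a} := CStarAlgebra.span_nonneg (A := A) ▸ trivial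
  induction this using Submodule.span_induction with
  | mem x hx => exact map_eq_zero_of_nonneg hx
  | zero => simp
  | add x y _ _ hx hy => simp [mul_add, add_mul, hx, hy]
  | smul c x _ hx => simp [hx]

end RickartCStarAlgebra

/-! ### Positive functionals from their values on the positive cone -/

section PositiveCone

open scoped ComplexOrder

variable {A : Type*} [CStarAlgebra A] [PartialOrder A] [StarOrderedRing A]

lemma exists_linearMap_selfAdjoint_eq_of_nonneg {f : A → ℝ}
    (f_add : ∀ x y, 0 ≤ x → 0 ≤ y → f (x + y) = f x + f y)
    (f_smul : ∀ (c : ℝ) x, 0 ≤ c → 0 ≤ x → f (c • x) = c * f x) :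
    ∃ g : selfAdjoint A →ₗ[ℝ] ℝ, ∀ x : selfAdjoint A, 0 ≤ (x : A) → g x = f x := by
  have f_posPart_sub {x a b : A} (ha : 0 ≤ a) (hb : 0 ≤ b) (hx : x = a - b) :
      f x⁺ - f x⁻ = f a - f b := by
    have hx_sa : IsSelfAdjoint x := hx ▸ ha.isSelfAdjoint.sub hb.isSelfAdjoint
    have h : x⁺ + b = a + x⁻ :=
      sub_eq_sub_iff_add_eq_add.mp ((CFC.posPart_sub_negPart x).trans hx)
    rw [sub_eq_sub_iff_add_eq_add, ← f_add _ _ (CFC.posPart_nonneg x) hb, h,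
      f_add _ _ ha (CFC.negPart_nonneg x)]
  refine ⟨{ toFun x := f (x : A)⁺ - f (x : A)⁻, map_add' x y := ?_, map_smul' t x := ?_ },
    fun x hx ↦ ?_⟩
  · have hxy : ((x + y : selfAdjoint A) : A) = ((x : A)⁺ + (y : A)⁺) - ((x : A)⁻ + (y : A)⁻) := by
      rw [add_sub_add_comm, CFC.posPart_sub_negPart (x : A) x.2,
        CFC.posPart_sub_negPart (y : A) y.2]
      rfl
    have hx := CFC.posPart_nonneg (x : A)
    have hy := CFC.posPart_nonneg (y : A)
    have hx' := CFC.negPart_nonneg (x : A)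
    have hy' := CFC.negPart_nonneg (y : A)
    rw [f_posPart_sub (add_nonneg hx hy) (add_nonneg hx' hy') hxy, f_add _ _ hx hy,
      f_add _ _ hx' hy', add_sub_add_comm]
  · have hx := CFC.posPart_nonneg (x : A)
    have hx' := CFC.negPart_nonneg (x : A)
    rcases le_total 0 t with ht | ht
    · simp [CFC.posPart_smul_of_nonneg ht, CFC.negPart_smul_of_nonneg ht, f_smul _ _ ht, hx, hx',
        mul_sub]
    · have ht' := neg_nonneg.mpr ht
      simp only [selfAdjoint.val_smul, CFC.posPart_smul_of_nonpos ht,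
        CFC.negPart_smul_of_nonpos ht, f_smul _ _ ht' hx, f_smul _ _ ht' hx', RingHom.id_apply,
        smul_eq_mul]
      ring
  · have f_zero : f 0 = 0 := by simpa using f_add 0 0 le_rfl le_rfl
    simpa [f_zero] using f_posPart_sub hx le_rfl (sub_zero _).symm

lemma exists_positiveLinearMap_eq_of_nonneg {f : A → ℝ}
    (f_add : ∀ x y, 0 ≤ x → 0 ≤ y → f (x + y) = f x + f y)
    (f_smul : ∀ (c : ℝ) x, 0 ≤ c → 0 ≤ x → f (c • x) = c * f x)
    (f_nonneg : ∀ x, 0 ≤ x → 0 ≤ f x) :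
    ∃ φ : A →ₚ[ℂ] ℂ, ∀ x, 0 ≤ x → φ x = f x := by
  obtain ⟨g, hg⟩ := exists_linearMap_selfAdjoint_eq_of_nonneg f_add f_smul
  have apply_eq {x : A} (hx : 0 ≤ x) :
      Module.Dual.extendRCLike (𝕜 := ℂ) (g ∘ₗ realPart) x = f x := by
    have hx_re : (ℜ x : A) = x := hx.isSelfAdjoint.coe_realPart
    have hx_im : ℑ x = 0 := hx.isSelfAdjoint.imaginaryPart
    simp [Module.Dual.extendRCLike_apply, realPart_I_smul, hx_im, hg (ℜ x) (hx_re.symm ▸ hx),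
      hx_re]
  refine ⟨.mk₀ (Module.Dual.extendRCLike (g ∘ₗ realPart)) fun x hx ↦ ?_,
    fun x hx ↦ apply_eq hx⟩
  rw [apply_eq hx]
  exact_mod_cast f_nonneg x hx

end PositiveCone

/-! ### Traces -/

section Trace

open scoped ComplexOrder

variable {A : Type*} [CStarAlgebra A] [PartialOrder A] [StarOrderedRing A]

/-- A `[0, ∞]`-valued trace on the positive cone of a C⋆-algebra. -/
structure CStarTrace (A : Type*) [CStarAlgebra A] [PartialOrder A] where
  /-- The values outside the positive cone are junk. -/
  toFun : A → ℝ≥0∞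
  map_add' : ∀ x y, 0 ≤ x → 0 ≤ y → toFun (x + y) = toFun x + toFun y
  map_smul' : ∀ (c : ℝ≥0) x, 0 ≤ x → toFun (c • x) = c * toFun x
  map_mul_star' : ∀ x, toFun (x * star x) = toFun (star x * x)

namespace CStarTrace

instance : CoeFun (CStarTrace A) fun _ ↦ A → ℝ≥0∞ := ⟨toFun⟩

/-- A trace is faithful if it vanishes at no nonzero positive element. -/
def IsFaithful (τ : CStarTrace A) : Prop := ∀ x, 0 ≤ x → τ x = 0 → x = 0

/-- A trace is semifinite if every nonzero positive element dominates a nonzero positive element of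
finite trace. -/
def IsSemifinite (τ : CStarTrace A) : Prop :=
  ∀ x, 0 ≤ x → x ≠ 0 → ∃ y, 0 ≤ y ∧ y ≠ 0 ∧ y ≤ x ∧ τ y < ⊤

/-- A projection of finite trace. -/
structure IsFiniteProjection (τ : CStarTrace A) (p : A) : Prop where
  isStarProjection : IsStarProjection p
  lt_top : τ p < ⊤

variable {τ : CStarTrace A} {p : A}

lemma mono {x y : A} (hx : 0 ≤ x) (hxy : x ≤ y) : τ x ≤ τ y := by
  rw [← add_sub_cancel x y, τ.map_add' x _ hx (sub_nonneg.mpr hxy)]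
  exact le_self_add

lemma apply_conjugate_le (hp : IsStarProjection p) {y : A} (hy : 0 ≤ y) :
    τ (p * y * p) ≤ τ y := by
  have hs : IsSelfAdjoint (CFC.sqrt y) := (CFC.sqrt_nonneg y).isSelfAdjoint
  calc τ (p * y * p) = τ (star (CFC.sqrt y * p) * (CFC.sqrt y * p)) := by
        nth_rw 1 [← CFC.sqrt_mul_sqrt_self y]
        simp only [star_mul, hs.star_eq, hp.isSelfAdjoint.star_eq, mul_assoc]
    _ = τ (CFC.sqrt y * p * CFC.sqrt y) := by
        rw [← τ.map_mul_star', star_mul, hs.star_eq, hp.isSelfAdjoint.star_eq, mul_assoc,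
          ← mul_assoc p, hp.isIdempotentElem.eq, mul_assoc]
    _ ≤ τ (CFC.sqrt y * 1 * CFC.sqrt y) :=
        mono (hs.conjugate_nonneg hp.nonneg) (hs.conjugate_le_conjugate hp.le_one)
    _ = τ y := by rw [mul_one, CFC.sqrt_mul_sqrt_self y]

namespace IsFiniteProjection

lemma apply_conjugate_lt_top (hp : τ.IsFiniteProjection p) {x : A} (hx : 0 ≤ x) :
    τ (p * x * p) < ⊤ := by
  have hp_star := hp.isStarProjection
  have hle : p * x * p ≤ ‖x‖₊ • p := by
    simpa [hp_star.isSelfAdjoint.star_eq, hp_star.isIdempotentElem.eq, NNReal.smul_def] using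
      CStarAlgebra.star_left_conjugate_le_norm_smul (a := p) (b := x)
  calc τ (p * x * p) ≤ τ (‖x‖₊ • p) := mono (hp_star.isSelfAdjoint.conjugate_nonneg hx) hle
    _ = ‖x‖₊ * τ p := τ.map_smul' _ _ hp_star.nonneg
    _ < ⊤ := ENNReal.mul_lt_top ENNReal.coe_lt_top hp.lt_top

lemma exists_positiveLinearMap (hp : τ.IsFiniteProjection p) :
    ∃ φ : A →ₚ[ℂ] ℂ, ∀ x, 0 ≤ x → φ x = (τ (p * x * p)).toReal := by
  have conjugate_nonneg {x : A} (hx : 0 ≤ x) : 0 ≤ p * x * p :=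
    hp.isStarProjection.isSelfAdjoint.conjugate_nonneg hx
  refine exists_positiveLinearMap_eq_of_nonneg (fun x y hx hy ↦ ?_) (fun c x hc hx ↦ ?_)
    fun _ _ ↦ ENNReal.toReal_nonneg
  · rw [mul_add, add_mul, τ.map_add' _ _ (conjugate_nonneg hx) (conjugate_nonneg hy),
      ENNReal.toReal_add (hp.apply_conjugate_lt_top hx).ne (hp.apply_conjugate_lt_top hy).ne]
  · lift c to ℝ≥0 using hc
    have : p * ((c : ℝ) • x) * p = c • (p * x * p) := by
      rw [mul_smul_comm, smul_mul_assoc, NNReal.smul_def]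
    rw [this, τ.map_smul' c _ (conjugate_nonneg hx), ENNReal.toReal_mul, ENNReal.coe_toReal]

/-- The positive functional `x ↦ τ (p * x * p)` of a finite projection `p`. -/
noncomputable def compress (hp : τ.IsFiniteProjection p) : A →ₚ[ℂ] ℂ :=
  hp.exists_positiveLinearMap.choose

lemma compress_apply_of_nonneg (hp : τ.IsFiniteProjection p) {x : A} (hx : 0 ≤ x) :
    hp.compress x = (τ (p * x * p)).toReal :=
  hp.exists_positiveLinearMap.choose_spec x hx

lemma compress_conjugate (hp : τ.IsFiniteProjection p) (x : A) :
    hp.compress (p * x * p) = hp.compress x := by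
  have hp_star := hp.isStarProjection
  suffices hp.compress.toLinearMap ∘ₗ LinearMap.mulLeftRight ℂ (p, p) = hp.compress.toLinearMap
    from LinearMap.congr_fun this x
  refine LinearMap.ext_on (CStarAlgebra.span_nonneg (A := A)) fun x (hx : 0 ≤ x) ↦ ?_
  have hpp : p * (p * x * p) * p = p * x * p := by
    simp [mul_assoc, hp_star.isIdempotentElem.eq, ← mul_assoc p p]
  simp [hp.compress_apply_of_nonneg hx,
    hp.compress_apply_of_nonneg (hp_star.isSelfAdjoint.conjugate_nonneg hx), hpp]

lemma compress_mul_left (hp : τ.IsFiniteProjection p) (x : A) :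
    hp.compress (p * x) = hp.compress x := by
  rw [← hp.compress_conjugate, ← mul_assoc, hp.isStarProjection.isIdempotentElem.eq,
    hp.compress_conjugate]

lemma compress_mul_right (hp : τ.IsFiniteProjection p) (x : A) :
    hp.compress (x * p) = hp.compress x := by
  rw [← hp.compress_conjugate, mul_assoc, mul_assoc, hp.isStarProjection.isIdempotentElem.eq,
    ← mul_assoc, hp.compress_conjugate]

lemma compress_star_mul_mul_self (hp : τ.IsFiniteProjection p) (z : A) :
    hp.compress (star z * p * z) = hp.compress (z * p * star z) := by
  have hpz := hp.isStarProjection.isSelfAdjoint.star_eq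
  have hpp := hp.isStarProjection.isIdempotentElem.eq
  have h₁ : star (p * z * p) * (p * z * p) = p * (star z * p * z) * p := by
    simp [mul_assoc, hpz, ← mul_assoc p p, hpp]
  have h₂ : (p * z * p) * star (p * z * p) = p * (z * p * star z) * p := by
    simp [mul_assoc, hpz, ← mul_assoc p p, hpp]
  rw [hp.compress_apply_of_nonneg (star_left_conjugate_nonneg hp.isStarProjection.nonneg z),
    hp.compress_apply_of_nonneg (star_right_conjugate_nonneg hp.isStarProjection.nonneg z),
    ← h₁, ← h₂, τ.map_mul_star']

lemma compress_mul_mul_comm (hp : τ.IsFiniteProjection p) (x y : A) :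
    hp.compress (x * p * y) = hp.compress (y * p * x) := by
  suffices ∀ z w : A, hp.compress (star z * p * w) = hp.compress (w * p * star z) by
    simpa using this (star x) y
  intro z w
  have h₁ := hp.compress_star_mul_mul_self (z + w)
  have h₂ := hp.compress_star_mul_mul_self (z + Complex.I • w)
  simp only [star_add, star_smul, RCLike.star_def, Complex.conj_I, add_mul, mul_add,
    smul_mul_assoc, mul_smul_comm, map_add, map_smul, smul_eq_mul,
    hp.compress_star_mul_mul_self z, hp.compress_star_mul_mul_self w] at h₁ h₂
  linear_combination (1 / 2) * h₁ - (Complex.I / 2) * h₂ +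
    (hp.compress (star z * p * w) - hp.compress (star w * p * z) -
      hp.compress (w * p * star z) + hp.compress (z * p * star w)) / 2 * Complex.I_mul_I

lemma compress_map_eq_zero_of_le (hp : τ.IsFiniteProjection p)
    {D : A →ₗ[ℂ] A} (hD : IsLeibniz D) {q : A} (hq : IsStarProjection q) (hqp : q ≤ p) :
    hp.compress (D q) = 0 := by
  have hqpq : q * p * q = q := by
    rw [(hq.le_iff_mul_eq_left hp.isStarProjection).mp hqp, hq.isIdempotentElem.eq]
  have compress_mul_map : hp.compress (q * D q) = 0 := by
    calc hp.compress (q * D q) = hp.compress (q * p * (q * D q)) := by rw [← mul_assoc, hqpq]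
      _ = hp.compress (q * D q * p * q) := hp.compress_mul_mul_comm ..
      _ = hp.compress (q * D q * q) := by
        rw [mul_assoc, (hq.le_iff_mul_eq_right hp.isStarProjection).mp hqp]
      _ = 0 := by rw [hD.mul_map_mul_self hq.isIdempotentElem, map_zero]
  have compress_map_mul : hp.compress (D q * q) = 0 := by
    calc hp.compress (D q * q) = hp.compress (D q * q * p * q) := by
          rw [mul_assoc, mul_assoc, ← mul_assoc q, hqpq]
      _ = hp.compress (q * p * (D q * q)) := hp.compress_mul_mul_comm ..
      _ = hp.compress (q * D q * q) := by
        rw [(hq.le_iff_mul_eq_left hp.isStarProjection).mp hqp, mul_assoc]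
      _ = 0 := by rw [hD.mul_map_mul_self hq.isIdempotentElem, map_zero]
  rw [← hq.isIdempotentElem.eq, hD.map_mul, map_add, compress_mul_map, compress_map_mul, add_zero]

lemma compress_map_conjugate [IsRickartStarRing A] (hp : τ.IsFiniteProjection p)
    {D : A →ₗ[ℂ] A} (hD : IsLeibniz D) (x : A) : hp.compress (D (p * x * p)) = 0 :=
  map_mul_mul_self_eq_zero_of_forall_isStarProjection hp.isStarProjection
    (L := ⟨hp.compress.toLinearMap ∘ₗ D, (map_continuous hp.compress).comp hD.continuous⟩)
    (fun _ hq hqp ↦ hp.compress_map_eq_zero_of_le hD hq hqp) x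

lemma compress_map [IsRickartStarRing A] (hp : τ.IsFiniteProjection p)
    {D : A →ₗ[ℂ] A} (hD : IsLeibniz D) (x : A) :
    hp.compress (D x) = -hp.compress (D p * x + x * D p) := by
  have h := hp.compress_map_conjugate hD x
  rw [hD.map_mul, hD.map_mul, add_mul, map_add, map_add, hp.compress_mul_right,
    hp.compress_mul_right, hp.compress_mul_left, mul_assoc, hp.compress_mul_left] at h
  rw [map_add]
  linear_combination h

end IsFiniteProjection

section Separation

variable [IsRickartStarRing A]

lemma IsSemifinite.exists_isFiniteProjection_le (hτ : τ.IsSemifinite) {q : A}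
    (hq : IsStarProjection q) (hq0 : q ≠ 0) : ∃ p ≤ q, p ≠ 0 ∧ τ.IsFiniteProjection p := by
  obtain ⟨y, hy, hy0, hyq, hτy⟩ := hτ q hq.nonneg hq0
  have norm_pos : 0 < ‖y‖ := norm_pos_iff.mpr hy0
  have not_le : ¬y ≤ (‖y‖ / 2) • q := fun hle ↦ by
    have : ‖y‖ ≤ ‖y‖ / 2 := by
      calc ‖y‖ ≤ ‖(‖y‖ / 2) • q‖ := CStarAlgebra.norm_le_norm_of_nonneg_of_le hy hle
        _ = ‖y‖ / 2 * ‖q‖ := by rw [norm_smul, Real.norm_of_nonneg (by positivity)]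
        _ ≤ ‖y‖ / 2 := mul_le_of_le_one_right (by positivity) hq.norm_le
    linarith
  obtain ⟨p, hpq, hp, hp0, smul_le⟩ := exists_isStarProjection_smul_le_conjugate hy.isSelfAdjoint hq
    (hq.mul_right_and_mul_left_of_nonneg_of_le hy hyq).1 not_le
  refine ⟨p, hpq, hp0, hp, ENNReal.lt_top_of_mul_ne_top_right (a := (‖y‖₊ / 2 : ℝ≥0)) (ne_of_lt ?_)
    (by simpa using hy0)⟩
  calc (‖y‖₊ / 2 : ℝ≥0) * τ p = τ ((‖y‖₊ / 2) • p) := (τ.map_smul' _ _ hp.nonneg).symm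
    _ ≤ τ (p * y * p) := mono (smul_nonneg (‖y‖₊ / 2).2 hp.nonneg) smul_le
    _ ≤ τ y := apply_conjugate_le hp hy
    _ < ⊤ := hτy

lemma posPart_eq_zero_of_forall_compress_eq_zero (hτ : τ.IsFaithful)
    (hτ' : τ.IsSemifinite) {c : A} (hc : IsSelfAdjoint c)
    (h : ∀ (p) (hp : τ.IsFiniteProjection p), hp.compress c = 0) :
    c⁺ = 0 := by
  set q := rightSupport c⁺
  have hq : IsStarProjection q := isStarProjection_rightSupport _
  by_contra hc0
  obtain ⟨p, hpq, hp0, hp⟩ :=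
    hτ'.exists_isFiniteProjection_le hq (mt rightSupport_eq_zero_iff.mp hc0)
  have hpq_mul : p * q = p := (hp.isStarProjection.le_iff_mul_eq_left hq).mp hpq
  have hqp_mul : q * p = p := (hp.isStarProjection.le_iff_mul_eq_right hq).mp hpq
  have conjugate_eq : p * c⁺ * p = p * c * p := by
    rw [← rightSupport_posPart_mul_mul_self hc]
    calc p * (q * c * q) * p = (p * q) * c * (q * p) := by noncomm_ring
      _ = p * c * p := by rw [hpq_mul, hqp_mul]
  have compress_posPart : hp.compress c⁺ = 0 := by
    rw [← hp.compress_conjugate, conjugate_eq, hp.compress_conjugate, h p hp]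
  have hτ_eq : τ (p * c⁺ * p) = 0 := by
    rw [hp.compress_apply_of_nonneg (CFC.posPart_nonneg c), Complex.ofReal_eq_zero]
      at compress_posPart
    exact ((ENNReal.toReal_eq_zero_iff _).mp compress_posPart).resolve_right
      (hp.apply_conjugate_lt_top (CFC.posPart_nonneg c)).ne
  have conjugate_eq_zero : p * c⁺ * p = 0 :=
    hτ _ (hp.isStarProjection.isSelfAdjoint.conjugate_nonneg (CFC.posPart_nonneg c)) hτ_eq
  have mul_eq_zero : c⁺ * p = 0 := mul_eq_zero_of_conjugate_eq_zero (CFC.posPart_nonneg c) <| by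
    rwa [hp.isStarProjection.isSelfAdjoint.star_eq]
  exact hp0 (by rw [← hqp_mul, rightSupport_mul_eq_zero_iff.mpr mul_eq_zero])

lemma eq_zero_of_isSelfAdjoint_of_forall_compress_eq_zero (hτ : τ.IsFaithful)
    (hτ' : τ.IsSemifinite) {c : A} (hc : IsSelfAdjoint c)
    (h : ∀ (p) (hp : τ.IsFiniteProjection p), hp.compress c = 0) :
    c = 0 := by
  have hneg := posPart_eq_zero_of_forall_compress_eq_zero hτ hτ' hc.neg fun p hp ↦ by
    rw [map_neg, h p hp, neg_zero]
  rw [← CFC.posPart_sub_negPart c, ← CFC.posPart_neg, hneg,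
    posPart_eq_zero_of_forall_compress_eq_zero hτ hτ' hc h, sub_zero]

lemma eq_zero_of_forall_compress_eq_zero (hτ : τ.IsFaithful) (hτ' : τ.IsSemifinite) {b : A}
    (hb : ∀ (p) (hp : τ.IsFiniteProjection p), hp.compress b = 0) : b = 0 := by
  have compress_star (p) (hp : τ.IsFiniteProjection p) : hp.compress (star b) = 0 := by
    rw [map_star, hb p hp, star_zero]
  have realPart_eq_zero : (ℜ b : A) = 0 :=
    eq_zero_of_isSelfAdjoint_of_forall_compress_eq_zero hτ hτ' (ℜ b).2 fun p hp ↦ by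
      rw [realPart_apply_coe]
      simp [hb p hp, compress_star p hp]
  have imaginaryPart_eq_zero : (ℑ b : A) = 0 :=
    eq_zero_of_isSelfAdjoint_of_forall_compress_eq_zero hτ hτ' (ℑ b).2 fun p hp ↦ by
      rw [imaginaryPart_apply_coe]
      simp [hb p hp, compress_star p hp]
  rw [← realPart_add_I_smul_imaginaryPart b, realPart_eq_zero, imaginaryPart_eq_zero, smul_zero,
    add_zero]

end Separation

end CStarTrace

/-- A 2-local derivation of a complex algebra: a map, not assumed linear, that agrees at any two
points with a derivation depending on the points. -/
def IsTwoLocalDerivation {A : Type*} [Ring A] [Algebra ℂ A] (Δ : A → A) : Prop :=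
  ∀ x y, ∃ D : A →ₗ[ℂ] A, IsLeibniz D ∧ Δ x = D x ∧ Δ y = D y

theorem twoLocalDerivation_additive_of_semifinite_general [IsRickartStarRing A]
    (τ : CStarTrace A) (hτ : τ.IsFaithful) (hτ' : τ.IsSemifinite) {Δ : A → A}
    (hΔ : IsTwoLocalDerivation Δ) (u v : A) : Δ (u + v) = Δ u + Δ v := by
  rw [← sub_eq_zero]
  refine CStarTrace.eq_zero_of_forall_compress_eq_zero hτ hτ' fun p hp ↦ ?_
  have compress_apply (x : A) : hp.compress (Δ x) = -hp.compress (Δ p * x + x * Δ p) := by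
    obtain ⟨D, hD, hx, hp'⟩ := hΔ x p
    rw [hx, hp', hp.compress_map hD]
  simp only [map_sub, map_add, compress_apply, mul_add, add_mul]
  ring

end Trace

/-! ### Von Neumann algebras -/

section StarSubalgebra

variable {A : Type*} [CStarAlgebra A] [PartialOrder A] [StarOrderedRing A]
  {S : Type*} [SetLike S A] [SubringClass S A] [SMulMemClass S ℂ A] [StarMemClass S A]
  {s : S} [IsClosed (s : Set A)]

lemma sqrt_mem_of_isClosed {a : A} (ha : a ∈ s) : CFC.sqrt a ∈ s := by
  by_cases h : 0 ≤ a
  · rw [CFC.sqrt_eq_real_sqrt a h]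
    exact cfcₙ_mem (𝕜' := ℂ) _ ha
  · rw [CFC.sqrt, cfcₙ_apply_of_not_predicate a h]
    exact zero_mem s

lemma starOrderedRing_of_isClosed : StarOrderedRing s :=
  .of_nonneg_iff' (fun h z ↦ add_le_add_right (α := A) h z) fun x ↦ by
    refine ⟨fun hx : 0 ≤ (x : A) ↦ ⟨⟨CFC.sqrt x, sqrt_mem_of_isClosed x.2⟩, Subtype.ext ?_⟩, ?_⟩
    · simp [(CFC.sqrt_nonneg (x : A)).isSelfAdjoint.star_eq, CFC.sqrt_mul_sqrt_self _ hx]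
    · rintro ⟨y, rfl⟩
      exact star_mul_self_nonneg (y : A)

end StarSubalgebra

section VonNeumann

variable {M : VonNeumannAlgebra H}

lemma starProjection_orthogonal_ker_mem {a : H →L[ℂ] H} (ha : a ∈ M) :
    a.kerᗮ.starProjection ∈ M := by
  rw [VonNeumannAlgebra.IsStarProjection.mem_iff isStarProjection_starProjection]
  intro w hw v hv
  rw [Submodule.range_starProjection] at hv
  rw [Submodule.mem_comap, Submodule.range_starProjection, Submodule.mem_orthogonal]
  intro k (hk : a k = 0)
  have hwk : a (star w k) = 0 := by
    have := VonNeumannAlgebra.mem_commutant_iff.mp (star_mem hw) a ha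
    simpa [hk] using DFunLike.congr_fun this k
  calc inner ℂ k (w v) = inner ℂ (star w k) v := (w.adjoint_inner_left v k).symm
    _ = 0 := (Submodule.mem_orthogonal _ _).mp hv _ hwk

instance (M : VonNeumannAlgebra H) : IsClosed (M : Set (H →L[ℂ] H)) := by
  rw [← M.centralizer_centralizer]
  exact Set.isClosed_centralizer _

instance : StarOrderedRing M := starOrderedRing_of_isClosed

instance : IsRickartStarRing M where
  exists_isStarProjection_mul_eq_zero_iff a := by
    let q : M := ⟨_, starProjection_orthogonal_ker_mem a.2⟩
    have hq : IsStarProjection (q : H →L[ℂ] H) := isStarProjection_starProjection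
    refine ⟨q, ⟨Subtype.ext hq.isIdempotentElem, Subtype.ext hq.isSelfAdjoint⟩, fun x ↦ ?_⟩
    have apply_eq_zero_iff (v : H) : (q : H →L[ℂ] H) v = 0 ↔ (a : H →L[ℂ] H) v = 0 := by
      have := (a : H →L[ℂ] H).isClosed_ker.completeSpace_coe
      rw [Submodule.starProjection_apply_eq_zero_iff, Submodule.orthogonal_orthogonal]
      exact LinearMap.mem_ker
    rw [Subtype.ext_iff, Subtype.ext_iff, ContinuousLinearMap.ext_iff, ContinuousLinearMap.ext_iff]
    exact forall_congr' fun v ↦ apply_eq_zero_iff ((x : H →L[ℂ] H) v)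

lemma isPos_iff_nonneg {x : M} : IsPos M x ↔ 0 ≤ x :=
  (ContinuousLinearMap.nonneg_iff_isPositive _).symm

namespace FNSTrace

/-- The underlying trace on the C⋆-algebra `M`, forgetting normality. -/
def toCStarTrace (t : FNSTrace M) : CStarTrace M where
  toFun := t.τ
  map_add' x y hx hy := t.additive x y (isPos_iff_nonneg.mpr hx) (isPos_iff_nonneg.mpr hy)
  map_smul' c x hx := t.pos_smul c x (isPos_iff_nonneg.mpr hx)
  map_mul_star' := t.tracial

lemma isFaithful_toCStarTrace (t : FNSTrace M) : t.toCStarTrace.IsFaithful :=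
  fun x hx ↦ t.faithful x (isPos_iff_nonneg.mpr hx)

lemma isSemifinite_toCStarTrace (t : FNSTrace M) : t.toCStarTrace.IsSemifinite :=
  fun x hx hx0 ↦ by
    obtain ⟨y, hy, hy0, hyx, hτy⟩ := t.semifinite x (isPos_iff_nonneg.mpr hx) hx0
    exact ⟨y, isPos_iff_nonneg.mp hy, hy0, hyx, hτy⟩

end FNSTrace

lemma Is2LocalDerivation.isTwoLocalDerivation {Δ : M → M}
    (hΔ : Is2LocalDerivation M Δ) : IsTwoLocalDerivation Δ := fun x y ↦ by
  obtain ⟨D, ⟨map_add, map_smul, map_mul⟩, hx, hy⟩ := hΔ x y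
  exact ⟨⟨⟨D, map_add⟩, map_smul⟩, map_mul, hx, hy⟩

end VonNeumann

/-- Every 2-local derivation on a semi-finite von Neumann algebra (one admitting a faithful
normal semifinite trace) is additive. -/
theorem twoLocalDerivation_additive_of_semifinite
    (M : VonNeumannAlgebra H) (hM : Nonempty (FNSTrace M))
    (Δ : M → M) (hΔ : Is2LocalDerivation M Δ)
    (u v : M) : Δ (u + v) = Δ u + Δ v := by
  obtain ⟨t⟩ := hM
  exact twoLocalDerivation_additive_of_semifinite_general t.toCStarTrace t.isFaithful_toCStarTrace
    t.isSemifinite_toCStarTrace hΔ.isTwoLocalDerivation u v
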